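/- arXiv:2604.13212 — 2 statements merged into one kernel-verified Lean document; each statement's English description precedes it below -/
import Mathlib

section
/- For every integer r ≥ 2, the even cycle C_{2r} satisfies ST^(4)*(C_{2r}) = 2. -/
/-!
Lower bound.  For an edge `ab` with both ends present, the condition `S a < T b ∧ S b < T a` is
preserved by every legal operation: if `a` is treated and `b` is not saved, both sides of
`S b < T a` drop by one; if `b` is saved, then `S b + T b < S a + T a` together with `S a < T b`
leaves room for `T a` to drop.  A degenerate graph with an edge therefore has `t ≤ s`.

Upper bound.  The pair `(t + 1, t)` works for each `t ≥ 1`, giving the ratio `2 + 1 / t`.  Only one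
colour class of the cycle is treated until it is exhausted, always at a vertex `u` whose remaining
target `c u` is maximal.  The first treatment of `u` saves nobody; every later one saves the
predecessor of `u` and shades its successor.  A vertex of the other class is thus shaded once by
both neighbours and afterwards by a single one, so its shield is from then on the remaining target
of that neighbour, which maximality bounds by `c u`.  Hence saving is affordable: it costs at most
`c u + t`, less than the `c u + (t + 1)` that `u` provides.  Once the class is exhausted, the
remaining vertices are pairwise nonadjacent and can be deleted in any order.
-/

open scoped Classical

noncomputable section

namespace StrictDeg

/-- The state of the `ShadeSave` process: the active vertex set (the vertex set of the
current induced subgraph), the current shield, and the current target. -/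
structure State (V : Type) where
  A : Finset V
  S : V → ℕ
  T : V → ℕ

variable {V : Type}

/-- The output of the operation `ShadeSave(G[A], S, T, u, W)`. -/
def applyStep (G : SimpleGraph V) (st : State V) (u : V) (W : Finset V) : State V where
  A := if st.T u = 1 then st.A.erase u else st.A
  S := fun v => if G.Adj u v ∧ v ∈ st.A ∧ v ∉ W then st.S v - 1 else st.S v
  T := fun v => if v = u ∧ 1 < st.T u then st.T u - 1 else st.T v

/-- Legality of the operation `ShadeSave(G[A], S, T, u, W)`:  `u` is a vertex of the current
graph, `W` is a set of neighbors of `u` in the current graph,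
`S u + T u > ∑_{w ∈ W} (S w + T w)`, and the output shield is nonnegative (in `ℕ` terms:
every neighbor of `u` in the current graph that is not saved has shield value at least 1). -/
def LegalStep (G : SimpleGraph V) (st : State V) (u : V) (W : Finset V) : Prop :=
  u ∈ st.A ∧
  (∀ w ∈ W, w ∈ st.A ∧ G.Adj u w) ∧
  (∑ w ∈ W, (st.S w + st.T w)) < st.S u + st.T u ∧
  (∀ v ∈ st.A, G.Adj u v → v ∉ W → 1 ≤ st.S v)

/-- `LegalSeq G st l` means `l` is a legal sequence of `ShadeSave` operations starting
from the state `st`. -/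
def LegalSeq (G : SimpleGraph V) : State V → List (V × Finset V) → Prop
  | _, [] => True
  | st, op :: rest => LegalStep G st op.1 op.2 ∧ LegalSeq G (applyStep G st op.1 op.2) rest

/-- The final state after applying the operations in `l` in order. -/
def finalState (G : SimpleGraph V) (st : State V) (l : List (V × Finset V)) : State V :=
  l.foldl (fun s op => applyStep G s op.1 op.2) st

/-- The induced subgraph of `G` on `A`, with shield `S` and target `T`, admits a complete
legal sequence, i.e. it is `ST⁽³⁾`-`(S,T)`-degenerate. -/
def ST3DegOn (G : SimpleGraph V) (A : Finset V) (S T : V → ℕ) : Prop :=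
  ∃ l : List (V × Finset V),
    LegalSeq G ⟨A, S, T⟩ l ∧ (finalState G ⟨A, S, T⟩ l).A = ∅

/-- The induced subgraph of `G` on `A`, with shield `S` and target `T`, admits a complete
restricted (every operation saves on at most one vertex) legal sequence, i.e. it is
`ST⁽⁴⁾`-`(S,T)`-degenerate. -/
def ST4DegOn (G : SimpleGraph V) (A : Finset V) (S T : V → ℕ) : Prop :=
  ∃ l : List (V × Finset V),
    LegalSeq G ⟨A, S, T⟩ l ∧ (∀ op ∈ l, op.2.card ≤ 1) ∧
      (finalState G ⟨A, S, T⟩ l).A = ∅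

/-- `G` is `ST⁽³⁾`-`(S,T)`-degenerate. -/
def ST3Deg [Fintype V] (G : SimpleGraph V) (S T : V → ℕ) : Prop :=
  ST3DegOn G Finset.univ S T

/-- `G` is `ST⁽⁴⁾`-`(S,T)`-degenerate. -/
def ST4Deg [Fintype V] (G : SimpleGraph V) (S T : V → ℕ) : Prop :=
  ST4DegOn G Finset.univ S T

/-- The fractional strict type-3 degeneracy
`ST⁽³⁾*(G) = inf {(s+t)/t : G is ST⁽³⁾-(s,t)-degenerate}`. -/
def ST3Star [Fintype V] (G : SimpleGraph V) : ℝ :=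
  sInf { x : ℝ | ∃ s t : ℕ, 1 ≤ t ∧ ST3Deg G (fun _ => s) (fun _ => t) ∧
    x = ((s : ℝ) + t) / t }

/-- The fractional strict type-4 degeneracy
`ST⁽⁴⁾*(G) = inf {(s+t)/t : G is ST⁽⁴⁾-(s,t)-degenerate}`. -/
def ST4Star [Fintype V] (G : SimpleGraph V) : ℝ :=
  sInf { x : ℝ | ∃ s t : ℕ, 1 ≤ t ∧ ST4Deg G (fun _ => s) (fun _ => t) ∧
    x = ((s : ℝ) + t) / t }

/-- A cover `𝓗 = (L, H)` of the graph `G`. -/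
structure Cover (G : SimpleGraph V) where
  /-- The vertex type of the cover graph `H`. -/
  U : Type
  fin : Fintype U
  /-- The cover graph. -/
  H : SimpleGraph U
  /-- The lists: `L v` is the part of the partition of `V(H)` corresponding to `v`. -/
  L : V → Finset U
  part : ∀ x : U, ∃! v : V, x ∈ L v
  indep : ∀ v : V, ∀ x ∈ L v, ∀ y ∈ L v, ¬ H.Adj x y
  cross : ∀ u v : V, ∀ x ∈ L u, ∀ y ∈ L v, H.Adj x y → G.Adj u v
  matching : ∀ u v : V, G.Adj u v → ∀ x ∈ L u, ∀ y ∈ L v, ∀ y' ∈ L v,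
      H.Adj x y → H.Adj x y' → y = y'

/-- `G` is `(𝓗, b)`-colorable: there is an independent set of the cover graph meeting
every list in at least `b` vertices. -/
def Cover.Colorable {G : SimpleGraph V} (C : Cover G) (b : ℕ) : Prop :=
  ∃ I : Finset C.U, (∀ x ∈ I, ∀ y ∈ I, ¬ C.H.Adj x y) ∧ ∀ v : V, b ≤ (I ∩ C.L v).card

/-- `G` is `(a,b)`-DP-colorable. -/
def DPColorable (G : SimpleGraph V) (a b : ℕ) : Prop :=
  ∀ C : Cover G, (∀ v : V, (C.L v).card = a) → C.Colorable b

/-- The fractional DP-chromatic number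
`χ*_DP(G) = inf {a/b : G is (a,b)-DP-colorable}`. -/
def DPStar (G : SimpleGraph V) : ℝ :=
  sInf { x : ℝ | ∃ a b : ℕ, 1 ≤ b ∧ b ≤ a ∧ DPColorable G a b ∧ x = (a : ℝ) / b }

/-- `G` is `(F₁, F₂)`-DP-colorable. -/
def DPColorableFn (G : SimpleGraph V) (F₁ F₂ : V → ℕ) : Prop :=
  ∀ C : Cover G, (∀ v : V, (C.L v).card = F₁ v) →
    ∃ I : Finset C.U, (∀ x ∈ I, ∀ y ∈ I, ¬ C.H.Adj x y) ∧
      ∀ v : V, (I ∩ C.L v).card = F₂ v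

section Step

variable {G : SimpleGraph V} {st : State V} {u v : V} {W : Finset V}

lemma mem_applyStep_A : v ∈ (applyStep G st u W).A ↔ v ∈ st.A ∧ (v = u → st.T u ≠ 1) := by
  simp only [applyStep]
  split_ifs with h <;> simp [h, and_comm]

lemma applyStep_A_subset : (applyStep G st u W).A ⊆ st.A :=
  fun _ hv => (mem_applyStep_A.1 hv).1

lemma applyStep_S_le : (applyStep G st u W).S v ≤ st.S v := by
  simp only [applyStep]
  split_ifs <;> omega

lemma applyStep_T_of_ne (h : v ≠ u) : (applyStep G st u W).T v = st.T v := by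
  simp [applyStep, h]

lemma applyStep_T_self : (applyStep G st u W).T u = if 1 < st.T u then st.T u - 1 else st.T u := by
  simp [applyStep]

lemma one_le_applyStep_T (h : 1 ≤ st.T v) : 1 ≤ (applyStep G st u W).T v := by
  simp only [applyStep]
  grind

lemma sum_T_applyStep_lt (hu : u ∈ st.A) (hT : 1 ≤ st.T u) :
    ∑ v ∈ (applyStep G st u W).A, (applyStep G st u W).T v < ∑ v ∈ st.A, st.T v := by
  have hle : ∀ v, (applyStep G st u W).T v ≤ st.T v := fun v => by
    simp only [applyStep]
    grind
  by_cases h : st.T u = 1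
  · calc ∑ v ∈ (applyStep G st u W).A, (applyStep G st u W).T v
        ≤ ∑ v ∈ (applyStep G st u W).A, st.T v := Finset.sum_le_sum fun v _ => hle v
      _ < ∑ v ∈ st.A, st.T v :=
        Finset.sum_lt_sum_of_subset applyStep_A_subset hu
          (fun hmem => (mem_applyStep_A.1 hmem).2 rfl h) hT fun _ _ _ => Nat.zero_le _
  · have hA : (applyStep G st u W).A = st.A := if_neg h
    rw [hA]
    refine Finset.sum_lt_sum (fun v _ => hle v) ⟨u, hu, ?_⟩
    rw [applyStep_T_self]
    split_ifs <;> omega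

lemma LegalSeq.invariant {P : State V → Prop}
    (hP : ∀ st u W, P st → LegalStep G st u W → P (applyStep G st u W)) :
    ∀ {l : List (V × Finset V)} {st : State V}, LegalSeq G st l → P st → P (finalState G st l)
  | [], _, _, h => h
  | op :: _, st, ⟨hstep, hrest⟩, h => hrest.invariant hP (hP st op.1 op.2 h hstep)

lemma ST4DegOn.of_applyStep (hstep : LegalStep G st u W) (hW : W.card ≤ 1)
    (h : ST4DegOn G (applyStep G st u W).A (applyStep G st u W).S (applyStep G st u W).T) :
    ST4DegOn G st.A st.S st.T := by
  obtain ⟨l, hl, hcard, hempty⟩ := h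
  exact ⟨(u, W) :: l, ⟨hstep, hl⟩, List.forall_mem_cons.2 ⟨hW, hcard⟩, hempty⟩

lemma ST4DegOn.st3DegOn {A : Finset V} {S T : V → ℕ} (h : ST4DegOn G A S T) : ST3DegOn G A S T :=
  let ⟨l, hl, _, hempty⟩ := h
  ⟨l, hl, hempty⟩

lemma st4DegOn_of_isIndepSet (hA : G.IsIndepSet (st.A : Set V)) (hT : ∀ v ∈ st.A, 1 ≤ st.T v) :
    ST4DegOn G st.A st.S st.T := by
  induction hm : ∑ v ∈ st.A, st.T v using Nat.strong_induction_on generalizing st with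
  | _ m ih =>
    obtain hempty | ⟨u, hu⟩ := st.A.eq_empty_or_nonempty
    · exact ⟨[], trivial, by simp, hempty⟩
    · have hTu := hT u hu
      have hlegal : LegalStep G st u ∅ :=
        ⟨hu, by simp, by rw [Finset.sum_empty]; omega,
          fun v hv hadj => absurd hadj (hA hu hv hadj.ne)⟩
      have hsub : (applyStep G st u ∅).A ⊆ st.A := applyStep_A_subset
      exact .of_applyStep hlegal (by simp) <|
        ih _ (hm ▸ sum_T_applyStep_lt hu hTu) (hA.mono (Finset.coe_subset.2 hsub))
          (fun v hv => one_le_applyStep_T (hT v (hsub hv))) rfl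

end Step

section LowerBound

variable {G : SimpleGraph V} {st : State V} {a b u : V} {W : Finset V}

/-- Both ends of the pair `a`, `b` are present and each has its shield below the other's target.
For an edge `ab` this state of affairs is permanent, so neither end can be deleted. -/
def Locked (st : State V) (a b : V) : Prop :=
  (a ∈ st.A ∧ st.S b < st.T a) ∧ (b ∈ st.A ∧ st.S a < st.T b)

lemma LegalStep.mem_and_shield_lt_target (hstep : LegalStep G st u W) (hab : G.Adj a b)
    (h : Locked st a b) :
    a ∈ (applyStep G st u W).A ∧ (applyStep G st u W).S b < (applyStep G st u W).T a := by
  obtain ⟨⟨ha, hba⟩, hb, hab'⟩ := h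
  obtain ⟨-, -, hsum, hshield⟩ := hstep
  obtain rfl | hau := eq_or_ne a u
  · have hdrop : (applyStep G st a W).S b + 1 < st.T a := by
      by_cases hbW : b ∈ W
      · have hsave : st.S b + st.T b < st.S a + st.T a :=
          (Finset.single_le_sum (f := fun w => st.S w + st.T w) (fun _ _ => Nat.zero_le _)
            hbW).trans_lt hsum
        simp only [applyStep, hbW, not_true_eq_false, and_false, if_false]
        omega
      · have hpos := hshield b hb hab hbW
        simp only [applyStep, hab, hb, hbW, not_false_eq_true, and_self, if_true]
        omega
    refine ⟨mem_applyStep_A.2 ⟨ha, fun _ => by omega⟩, ?_⟩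
    rw [applyStep_T_self, if_pos (by omega)]
    omega
  · refine ⟨mem_applyStep_A.2 ⟨ha, fun h => absurd h hau⟩, ?_⟩
    rw [applyStep_T_of_ne hau]
    exact applyStep_S_le.trans_lt hba

lemma Locked.applyStep (hab : G.Adj a b) (h : Locked st a b) (hstep : LegalStep G st u W) :
    Locked (applyStep G st u W) a b :=
  ⟨hstep.mem_and_shield_lt_target hab h, hstep.mem_and_shield_lt_target hab.symm h.symm⟩

lemma ST3DegOn.target_le_shield_of_adj {A : Finset V} {S T : V → ℕ} (h : ST3DegOn G A S T)
    (hab : G.Adj a b) (ha : a ∈ A) (hb : b ∈ A) : T a ≤ S b ∨ T b ≤ S a := by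
  by_contra! hlt
  obtain ⟨l, hl, hempty⟩ := h
  have hfinal : Locked (finalState G ⟨A, S, T⟩ l) a b :=
    hl.invariant (P := fun st => Locked st a b) (fun _ _ _ h hstep => h.applyStep hab hstep)
      ⟨⟨ha, hlt.1⟩, hb, hlt.2⟩
  simpa [hempty] using hfinal.1.1

end LowerBound

lemma st4Star_eq_two [Fintype V] {G : SimpleGraph V} {a b : V} (hab : G.Adj a b)
    (h : ∀ t : ℕ, 1 ≤ t → ST4Deg G (fun _ => t + 1) (fun _ => t)) : ST4Star G = 2 := by
  have hmem (k : ℕ) : (2 + 1 / ((k : ℝ) + 1)) ∈ { x : ℝ | ∃ s t : ℕ, 1 ≤ t ∧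
      ST4Deg G (fun _ => s) (fun _ => t) ∧ x = ((s : ℝ) + t) / t } := by
    refine ⟨k + 2, k + 1, by omega, h (k + 1) (by omega), ?_⟩
    push_cast
    field_simp
    ring
  refine IsGLB.csInf_eq ⟨?_, fun y hy => le_of_forall_pos_le_add fun ε hε => ?_⟩ ⟨_, hmem 0⟩
  · rintro x ⟨s, t, ht, hdeg, rfl⟩
    have hst : t ≤ s := by
      simpa using hdeg.st3DegOn.target_le_shield_of_adj hab (Finset.mem_univ a) (Finset.mem_univ b)
    have hst' : (t : ℝ) ≤ s := by exact_mod_cast hst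
    rw [le_div_iff₀ (by exact_mod_cast ht)]
    linarith
  · obtain ⟨k, hk⟩ := exists_nat_one_div_lt hε
    exact (hy (hmem k)).trans (by linarith)

/-- The data driving the upper-bound strategy on a properly 2-coloured graph: every vertex `y` of
colour `false` has exactly two neighbours, one that saves it and one that shades it, and no vertex
saves two others.  The maps carry no information at vertices of colour `true`. -/
structure SaveScheme (G : SimpleGraph V) (C : G.Coloring Bool) where
  saver : V → V
  shader : V → V
  adj_iff : ∀ {x y}, C y = false → (G.Adj x y ↔ x = saver y ∨ x = shader y)
  saver_ne_shader : ∀ {y}, C y = false → saver y ≠ shader y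
  saver_injOn : Set.InjOn saver {y | C y = false}

namespace SaveScheme

variable {G : SimpleGraph V} {C : G.Coloring Bool}

lemma color_eq_false_of_adj {u v : V} (hu : C u = true) (h : G.Adj u v) : C v = false := by
  simpa [hu] using (C.valid h).symm

variable [Fintype V] (P : SaveScheme G C) {t : ℕ} {c : V → ℕ} {u : V}

/-- The state of the process at which the vertices `x` of colour `true` have remaining targets `c x`
out of `t`.  A deleted vertex has `c x = 0` but keeps target `1`, as `applyStep` does; the summand
`1` in the shields records that the saver has not been treated yet. -/
def state (t : ℕ) (c : V → ℕ) : State V where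
  A := {v | C v = true → 0 < c v}
  S v := if C v then t + 1 else c (P.shader v) + if c (P.saver v) = t then 1 else 0
  T v := if C v then max 1 (c v) else t

/-- The vertices to be saved when `u` is treated: none the first time, later the one with saver
`u`. -/
def saved (t : ℕ) (c : V → ℕ) (u : V) : Finset V :=
  {y | C y = false ∧ P.saver y = u ∧ c u ≠ t}

lemma mem_saved {y : V} : y ∈ P.saved t c u ↔ C y = false ∧ P.saver y = u ∧ c u ≠ t := by
  simp [saved]

lemma card_saved_le_one : (P.saved t c u).card ≤ 1 :=
  Finset.card_le_one.2 fun _ hx _ hy =>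
    P.saver_injOn (P.mem_saved.1 hx).1 (P.mem_saved.1 hy).1
      ((P.mem_saved.1 hx).2.1.trans (P.mem_saved.1 hy).2.1.symm)

lemma state_const (ht : 1 ≤ t) :
    P.state t (fun _ => t) = ⟨Finset.univ, fun _ => t + 1, fun _ => t⟩ := by
  simp [state, ht, Nat.pos_of_ne_zero (Nat.one_le_iff_ne_zero.1 ht)]

lemma sum_saved_lt (hu : C u = true) (hmax : ∀ v, C v = true → c v ≤ c u) :
    ∑ y ∈ P.saved t c u, ((P.state t c).S y + (P.state t c).T y) <
      (P.state t c).S u + (P.state t c).T u := by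
  have hcost : ∀ y ∈ P.saved t c u, (P.state t c).S y + (P.state t c).T y ≤ c u + t := by
    intro y hy
    obtain ⟨hCy, hsaver, hne⟩ := P.mem_saved.1 hy
    have hshader : C (P.shader y) = true := by
      simpa [hCy] using C.valid ((P.adj_iff hCy).2 (.inr rfl))
    simpa [state, hCy, hsaver, hne] using hmax _ hshader
  calc ∑ y ∈ P.saved t c u, ((P.state t c).S y + (P.state t c).T y)
      ≤ (P.saved t c u).card • (c u + t) := Finset.sum_le_card_nsmul _ _ _ hcost
    _ ≤ c u + t := by simpa using Nat.mul_le_mul_right (c u + t) P.card_saved_le_one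
    _ < (P.state t c).S u + (P.state t c).T u := by
      simp only [state, hu, if_true]
      omega

lemma legalStep (hu : C u = true) (hcu : 0 < c u) (hmax : ∀ v, C v = true → c v ≤ c u) :
    LegalStep G (P.state t c) u (P.saved t c u) := by
  refine ⟨by simp [state, hcu], fun w hw => ?_, P.sum_saved_lt hu hmax, fun v _ hadj hv => ?_⟩
  · obtain ⟨hCw, hsaver, -⟩ := P.mem_saved.1 hw
    exact ⟨by simp [state, hCw], (P.adj_iff hCw).2 (.inl hsaver.symm)⟩
  · have hCv := color_eq_false_of_adj hu hadj
    obtain rfl | rfl := (P.adj_iff hCv).1 hadj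
    · have hfirst : c (P.saver v) = t := by simpa [mem_saved, hCv] using hv
      simp [state, hCv, hfirst]
    · simp only [state, hCv, Bool.false_eq_true, if_false]
      omega

lemma applyStep_state_S (hu : C u = true) (hcu : 0 < c u) (hct : c u ≤ t) (v : V) :
    (applyStep G (P.state t c) u (P.saved t c u)).S v =
      (P.state t (Function.update c u (c u - 1))).S v := by
  cases hCv : C v with
  | true =>
    have hadj : ¬ G.Adj u v := fun h => by simp [color_eq_false_of_adj hu h] at hCv
    simp [applyStep, state, hCv, hadj]
  | false =>
    have hne := P.saver_ne_shader hCv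
    simp only [applyStep, state, hCv, P.adj_iff hCv, mem_saved, Finset.mem_filter, Finset.mem_univ]
    obtain rfl | hsaver := eq_or_ne (P.saver v) u
    · rw [Function.update_self, Function.update_of_ne hne.symm]
      grind
    · rw [Function.update_of_ne hsaver]
      obtain rfl | hshader := eq_or_ne (P.shader v) u
      · rw [Function.update_self]
        grind
      · rw [Function.update_of_ne hshader]
        grind

lemma applyStep_state (hu : C u = true) (hcu : 0 < c u) (hct : c u ≤ t) :
    applyStep G (P.state t c) u (P.saved t c u) = P.state t (Function.update c u (c u - 1)) := by
  have hS := funext (P.applyStep_state_S hu hcu hct)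
  have hA : (applyStep G (P.state t c) u (P.saved t c u)).A =
      (P.state t (Function.update c u (c u - 1))).A := by
    ext v
    obtain rfl | hv := eq_or_ne v u
    · simp [mem_applyStep_A, state, hu, hcu]
    · simp [mem_applyStep_A, state, hv]
  have hT : (applyStep G (P.state t c) u (P.saved t c u)).T =
      (P.state t (Function.update c u (c u - 1))).T := by
    ext v
    obtain rfl | hv := eq_or_ne v u
    · simp only [applyStep_T_self, state, hu, if_true, Function.update_self]
      split_ifs <;> omega
    · simp [applyStep_T_of_ne hv, state, hv]
  exact (State.mk.injEq ..).mpr ⟨hA, hS, hT⟩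

lemma isIndepSet_state_A (h : ∀ v, C v = true → c v = 0) :
    G.IsIndepSet ((P.state t c).A : Set V) := by
  have hfalse : ∀ v ∈ (P.state t c).A, C v = false := fun v hv => by
    by_contra hCv
    simp_all [state]
  exact fun v hv w hw _ hadj => C.valid hadj ((hfalse v hv).trans (hfalse w hw).symm)

lemma st4DegOn_state (ht : 1 ≤ t) (hct : ∀ v, c v ≤ t) :
    ST4DegOn G (P.state t c).A (P.state t c).S (P.state t c).T := by
  induction c using WellFoundedLT.induction with
  | _ c ih =>
    by_cases hzero : ∀ v, C v = true → c v = 0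
    · refine st4DegOn_of_isIndepSet (P.isIndepSet_state_A hzero) fun v _ => ?_
      simp only [state]
      split_ifs <;> omega
    · push Not at hzero
      obtain ⟨v, hCv, hcv⟩ := hzero
      obtain ⟨u, hu, hmax⟩ :=
        Finset.exists_max_image ({v | C v = true} : Finset V) c ⟨v, by simpa using hCv⟩
      simp only [Finset.mem_filter, Finset.mem_univ, true_and] at hu hmax
      have hcu : 0 < c u := (Nat.pos_of_ne_zero hcv).trans_le (hmax v hCv)
      have hlt : Function.update c u (c u - 1) < c := update_lt_self_iff.2 (by omega)
      refine .of_applyStep (P.legalStep hu hcu hmax) P.card_saved_le_one ?_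
      rw [P.applyStep_state hu hcu (hct u)]
      exact ih _ hlt fun w => (hlt.le w).trans (hct w)

include P in
lemma st4Deg (ht : 1 ≤ t) : ST4Deg G (fun _ => t + 1) (fun _ => t) := by
  simpa only [ST4Deg, P.state_const ht] using P.st4DegOn_state ht (c := fun _ => t) fun _ => le_rfl

end SaveScheme

/-- On an even cycle, each vertex of colour `false` is saved by its successor and shaded by its
predecessor. -/
def evenCycleSaveScheme (n : ℕ) (hn : Even (n + 3)) :
    SaveScheme (SimpleGraph.cycleGraph (n + 3))
      (SimpleGraph.cycleGraph.bicoloring_of_even (n + 3) hn) where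
  saver y := y + 1
  shader y := y - 1
  adj_iff {x y} _ := by
    rw [SimpleGraph.cycleGraph_adj, sub_eq_iff_eq_add', sub_eq_iff_eq_add']
    grind
  saver_ne_shader {y} _ h := by
    rw [eq_sub_iff_add_eq, add_assoc, add_eq_left] at h
    simpa [Fin.val_add, Nat.mod_eq_of_lt (show 2 < n + 3 by omega)] using congrArg Fin.val h
  saver_injOn := (add_left_injective 1).injOn

/-- For every integer `r ≥ 2`, the even cycle `C_{2r}` satisfies
`ST⁽⁴⁾*(C_{2r}) = 2`. -/
theorem st4Star_even_cycle (r : ℕ) (hr : 2 ≤ r) :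
    ST4Star (SimpleGraph.cycleGraph (2 * r)) = 2 := by
  obtain ⟨n, hn⟩ : ∃ n, 2 * r = n + 3 := ⟨2 * r - 3, by omega⟩
  have heven : Even (n + 3) := hn ▸ even_two_mul r
  have hadj : (SimpleGraph.cycleGraph (n + 3)).Adj 0 1 := by simp [SimpleGraph.cycleGraph_adj]
  rw [hn]
  exact st4Star_eq_two hadj fun t ht => (evenCycleSaveScheme n heven).st4Deg ht

end StrictDeg
end
end

section
/- Suppose H is a connected graph and G is a subdivision of H in which every edge of H is replaced by internally disjoint paths each of length at least 2r, for some integer r ≥ 2. Then ST^(4)*(G) ≤ 2 + 1/r. -/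
/-!
The graph `G` is `ST⁽⁴⁾`-`(r + 1, r)`-degenerate, which gives the bound `(2r + 1) / r = 2 + 1 / r`.

Operating `r` times on every branch vertex, without saving, removes the branch vertices and costs
each of their neighbours `r` units of shield. What remains is a disjoint union of paths
`y₁, …, yₙ` with `n ≥ 2r - 1`. On each of them the even vertices operate in two sweeps. In the
first, `y₂, y₄, …` operate in this order, `y_{2j}` performing `r - j` operations (none if `j ≥ r`)
that save `y_{2j-1}`; in the second, they perform their remaining `min j r` operations in the
opposite order, now saving `y_{2j+1}`. An inner odd vertex `y_{2j+1}` is thus hit by `y_{2j}` in the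
first sweep and by `y_{2j+2}` in the second, at most `(r - j) + (j + 1) = r + 1` times if `j < r`
and `r` times otherwise. An odd end vertex is hit at most `r + 1` times as well, branch vertices
included, so the shields suffice; and whenever a vertex is to be saved, the earlier hits have made
its shield small enough for that to be legal. The odd vertices that remain are pairwise nonadjacent.
-/

open scoped Classical

noncomputable section

namespace StrictDeg

variable {V : Type}

/-- The internal vertices of a walk (its support minus its two endpoints). -/
def internals {V : Type} {G : SimpleGraph V} {a b : V} (p : G.Walk a b) : List V :=
  p.support.tail.dropLast

/-- `G` is a subdivision of `H` in which each edge of `H` is replaced by pairwise internally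
disjoint paths, each of length at least `minLen`.  The data consists of an injection `f` of
the vertices of `H` into those of `G` and, for each (ordered) edge of `H`, a path of `G`
between the images of its endpoints such that: the two orientations of an edge give the same
path (reversed); the paths have length at least `minLen`; internal vertices of the paths avoid
the branch vertices `f w`; distinct edges of `H` give internally disjoint paths; every vertex
of `G` is a branch vertex or an internal vertex of one of the paths; and the edges of `G` are
exactly the edges of the paths. -/
structure IsPathSubdivision {VH VG : Type} (H : SimpleGraph VH) (G : SimpleGraph VG)
    (minLen : ℕ) where
  f : VH ↪ VG
  P : ∀ ⦃u v : VH⦄, H.Adj u v → G.Walk (f u) (f v)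
  isPath : ∀ ⦃u v : VH⦄ (h : H.Adj u v), (P h).IsPath
  len : ∀ ⦃u v : VH⦄ (h : H.Adj u v), minLen ≤ (P h).length
  symm : ∀ ⦃u v : VH⦄ (h : H.Adj u v), P h.symm = (P h).reverse
  internal_not_branch : ∀ ⦃u v : VH⦄ (h : H.Adj u v),
      ∀ x ∈ internals (P h), ∀ w : VH, x ≠ f w
  internals_disjoint : ∀ ⦃u v u' v' : VH⦄ (h : H.Adj u v) (h' : H.Adj u' v'),
      s(u, v) ≠ s(u', v') → ∀ x ∈ internals (P h), x ∉ internals (P h')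
  cover_vertices : ∀ x : VG, (∃ w : VH, x = f w) ∨
      ∃ (u v : VH) (h : H.Adj u v), x ∈ internals (P h)
  cover_edges : ∀ x y : VG, G.Adj x y ↔ ∃ (u v : VH) (h : H.Adj u v), s(x, y) ∈ (P h).edges

theorem LegalStep.mono {G : SimpleGraph V} {A : Finset V} {S S' T T' : V → ℕ} {u : V}
    {W : Finset V} (h : LegalStep G ⟨A, S, T⟩ u W) (hS : ∀ v ∈ A, S v ≤ S' v)
    (hT : ∀ v ∈ A, T v = T' v) : LegalStep G ⟨A, S', T'⟩ u {w ∈ W | S' w = S w} := by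
  obtain ⟨hu, hWA, hsave, hhit⟩ := h
  refine ⟨hu, fun w hw => hWA w (Finset.mem_filter.1 hw).1, ?_, fun v hv ha hw => ?_⟩
  · calc ∑ w ∈ W with S' w = S w, (S' w + T' w)
        = ∑ w ∈ W with S' w = S w, (S w + T w) := Finset.sum_congr rfl fun w hw => by
          obtain ⟨hwW, hSw⟩ := Finset.mem_filter.1 hw
          rw [hSw, hT w (hWA w hwW).1]
      _ ≤ ∑ w ∈ W, (S w + T w) := Finset.sum_le_sum_of_subset (Finset.filter_subset _ _)
      _ < S u + T u := hsave
      _ ≤ S' u + T' u := by rw [hT u hu]; gcongr; exact hS u hu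
  · by_cases hvW : v ∈ W
    · have hlt : S v < S' v :=
        (hS v hv).lt_of_ne fun e => hw (Finset.mem_filter.2 ⟨hvW, e.symm⟩)
      exact Nat.one_le_of_lt hlt
    · exact (hhit v hv ha hvW).trans (hS v hv)

theorem ST4DegOn.of_legalStep {G : SimpleGraph V} {A : Finset V} {S T : V → ℕ} {u : V}
    {W : Finset V} (hl : LegalStep G ⟨A, S, T⟩ u W) (hW : W.card ≤ 1)
    (h : ST4DegOn G (applyStep G ⟨A, S, T⟩ u W).A (applyStep G ⟨A, S, T⟩ u W).S
      (applyStep G ⟨A, S, T⟩ u W).T) : ST4DegOn G A S T := by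
  obtain ⟨l, hlegal, hcard, hempty⟩ := h
  exact ⟨(u, W) :: l, ⟨hl, hlegal⟩, List.forall_mem_cons.2 ⟨hW, hcard⟩, hempty⟩

/-- A saved vertex whose larger shield might make saving it illegal can be hit instead. -/
theorem ST4DegOn.mono {G : SimpleGraph V} {A : Finset V} {S S' T T' : V → ℕ}
    (h : ST4DegOn G A S T) (hS : ∀ v ∈ A, S v ≤ S' v) (hT : ∀ v ∈ A, T v = T' v) :
    ST4DegOn G A S' T' := by
  obtain ⟨l, hlegal, hcard, hempty⟩ := h
  induction l generalizing A S S' T T' with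
  | nil => exact ⟨[], trivial, by simp, hempty⟩
  | cons op l ih =>
    obtain ⟨u, W⟩ := op
    obtain ⟨hl, hlegal⟩ := hlegal
    obtain ⟨hW, hcard⟩ := List.forall_mem_cons.1 hcard
    have hA : (applyStep G ⟨A, S', T'⟩ u {w ∈ W | S' w = S w}).A
        = (applyStep G ⟨A, S, T⟩ u W).A := by
      simp [applyStep, hT u hl.1]
    have hsub : (applyStep G ⟨A, S, T⟩ u W).A ⊆ A := by
      simp only [applyStep]
      split_ifs
      exacts [Finset.erase_subset _ _, subset_rfl]
    refine .of_legalStep (hl.mono hS hT) ((Finset.card_filter_le _ _).trans hW) ?_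
    rw [hA]
    refine ih (fun v hv => ?_) (fun v hv => ?_) hlegal hcard hempty
    · have := hS v (hsub hv)
      simp only [applyStep, hsub hv, true_and, Finset.mem_filter]
      grind
    · simp only [applyStep, hT v (hsub hv), hT u hl.1]

/-- The set saved by an operation on `u` that saves `w` whenever this is possible; it is empty
unless `w` is a neighbour of `u` in `G[A]`, so that choosing `w = u` means saving nothing. -/
def savedSet (G : SimpleGraph V) (A : Finset V) (u w : V) : Finset V :=
  {v ∈ A | v = w ∧ G.Adj u v}

theorem card_savedSet_le_one (G : SimpleGraph V) (A : Finset V) (u w : V) :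
    (savedSet G A u w).card ≤ 1 :=
  Finset.card_le_one.2 fun x hx y hy => by
    rw [(Finset.mem_filter.1 hx).2.1, (Finset.mem_filter.1 hy).2.1]

theorem notMem_savedSet {G : SimpleGraph V} {A : Finset V} {u v w : V} (hv : v ∈ A)
    (ha : G.Adj u v) : v ∉ savedSet G A u w ↔ v ≠ w := by
  simp [savedSet, hv, ha]

theorem LegalStep.of_savedSet {G : SimpleGraph V} {A : Finset V} {S T : V → ℕ} {u w : V}
    (hu : u ∈ A) (hT : 0 < T u) (hsave : w ∈ A → G.Adj u w → S w + T w < S u + T u)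
    (hhit : ∀ v ∈ A, G.Adj u v → v ≠ w → 0 < S v) :
    LegalStep G ⟨A, S, T⟩ u (savedSet G A u w) := by
  refine ⟨hu, fun v hv => ?_, ?_, fun v hv ha hw => hhit v hv ha ((notMem_savedSet hv ha).1 hw)⟩
  · exact ⟨(Finset.mem_filter.1 hv).1, (Finset.mem_filter.1 hv).2.2⟩
  · simp only [savedSet, Finset.sum_filter, ite_and, Finset.sum_ite_eq']
    split_ifs with hw ha
    exacts [hsave hw ha, by omega, by omega]

/-- Each operation of the batch lowers `S u + T u` by one and leaves the saved vertex alone. -/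
theorem ST4DegOn.of_batch {G : SimpleGraph V} {A : Finset V} {S T : V → ℕ} {u w : V} {c : ℕ}
    (hu : u ∈ A) (hT : 0 < T u) (hc : c ≤ T u)
    (hsave : w ∈ A → G.Adj u w → S w + T w + c ≤ S u + T u)
    (hhit : ∀ v ∈ A, G.Adj u v → v ≠ w → c ≤ S v)
    (h : ST4DegOn G (if c = T u then A.erase u else A)
      (fun v => if G.Adj u v ∧ v ≠ w then S v - c else S v) (Function.update T u (T u - c))) :
    ST4DegOn G A S T := by
  induction c with
  | zero => simpa [hT.ne] using h
  | succ c ih =>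
    refine ih (by omega) (fun hw ha => by have := hsave hw ha; omega)
      (fun v hv ha hw => by have := hhit v hv ha hw; omega) ?_
    rw [if_neg (by omega)]
    refine .of_legalStep (.of_savedSet (w := w) hu ?_ (fun hw ha => ?_) fun v hv ha hw => ?_)
      (card_savedSet_le_one ..) ?_
    · rw [Function.update_self]
      omega
    · have := hsave hw ha
      simp only [ha.ne', G.irrefl, ne_eq, not_true_eq_false, and_false, false_and, if_false,
        not_false_eq_true, Function.update_self, Function.update_of_ne]
      omega
    · have := hhit v hv ha hw
      rw [if_pos ⟨ha, hw⟩]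
      omega
    · have hA : (if c + 1 = T u then A.erase u else A) =
          if T u - c = 1 then A.erase u else A := if_congr (by omega) rfl rfl
      simp only [applyStep, Function.update_self, ← hA]
      refine h.mono (fun v hv => ?_) fun v hv => ?_
      · have hvA : v ∈ A := by
          split_ifs at hv
          exacts [Finset.mem_of_mem_erase hv, hv]
        by_cases ha : G.Adj u v
        · simp only [ha, hvA, notMem_savedSet hvA ha, true_and]
          split_ifs <;> omega
        · simp [ha]
      · rcases eq_or_ne v u with rfl | hvu
        · have : c + 1 ≠ T v := fun e => by simp [e] at hv
          rw [Function.update_self, if_pos ⟨rfl, by omega⟩]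
          omega
        · simp [hvu]

/-- The total loss of shield at `v` when every `u ∈ U` performs `c u` operations that save `s u`. -/
def loss (G : SimpleGraph V) (s : V → V) (c : V → ℕ) (U : Finset V) (v : V) : ℕ :=
  ∑ u ∈ U, if G.Adj u v ∧ v ≠ s u then c u else 0

theorem loss_insert {G : SimpleGraph V} {s : V → V} {c : V → ℕ} {U : Finset V} {u : V}
    (hu : u ∉ U) (v : V) : loss G s c (insert u U) v =
      (if G.Adj u v ∧ v ≠ s u then c u else 0) + loss G s c U v :=
  Finset.sum_insert hu

theorem loss_filter_insert_le {G : SimpleGraph V} {s : V → V} {c : V → ℕ} {U : Finset V} {u : V}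
    (hu : u ∉ U) (p : V → Prop) [DecidablePred p] (v : V) : loss G s c {x ∈ insert u U | p x} v ≤
      (if G.Adj u v ∧ v ≠ s u then c u else 0) + loss G s c {x ∈ U | p x} v := by
  rw [Finset.filter_insert]
  by_cases hp : p u
  · rw [if_pos hp]
    exact (loss_insert (fun h => hu (Finset.mem_filter.1 h).1) v).le
  · rw [if_neg hp]
    exact Nat.le_add_left _ _

/-- The vertices of `U` operate in the order given by `ρ`, so that a saved vertex has already been
hit by those of smaller rank. -/
theorem ST4DegOn.of_sweep {α : Type*} [LinearOrder α] {G : SimpleGraph V} (ρ : V → α) (s : V → V)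
    (c : V → ℕ) (U : Finset V) {A A' : Finset V} {S S' T T' : V → ℕ}
    (hU : U ⊆ A) (hind : G.IsIndepSet U) (hT : ∀ u ∈ U, 0 < T u) (hc : ∀ u ∈ U, c u ≤ T u)
    (hsave : ∀ u ∈ U, s u ∈ A → G.Adj u (s u) →
      S (s u) + T (s u) + c u ≤ S u + T u + loss G s c {x ∈ U | ρ x < ρ u} (s u))
    (hA' : ∀ v, v ∈ A' ↔ v ∈ A ∧ (v ∈ U → c v < T v))
    (hS' : ∀ v ∈ A', S' v + loss G s c U v ≤ S v)
    (hT' : ∀ v ∈ A', T' v = if v ∈ U then T v - c v else T v)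
    (h : ST4DegOn G A' S' T') : ST4DegOn G A S T := by
  induction U using Finset.induction_on_min_value ρ generalizing A S T with
  | empty =>
    obtain rfl : A' = A := by ext v; simp [hA']
    exact h.mono (fun v hv => by simpa [loss] using hS' v hv) fun v hv => by simp [hT' v hv]
  | insert a U haU hmin ih =>
    have hnadj : ∀ {x y}, x ∈ insert a U → y ∈ insert a U → ¬ G.Adj x y :=
      fun hx hy ha => hind hx hy ha.ne ha
    have haI := Finset.mem_insert_self a U
    have hUI : ∀ {x}, x ∈ U → x ∈ insert a U := Finset.mem_insert_of_mem
    have hne : ∀ {x}, x ∈ U → x ≠ a := fun hx e => haU (e ▸ hx)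
    have hhit : ∀ v ∈ A, G.Adj a v → v ≠ s a → c a ≤ S v := fun v hv ha hs => by
      have := hS' v ((hA' v).2 ⟨hv, fun hvI => absurd ha (hnadj haI hvI)⟩)
      rw [loss_insert haU, if_pos ⟨ha, hs⟩] at this
      omega
    have hmem {x : V} : x ∈ (if c a = T a then A.erase a else A) ↔ x ∈ A ∧ (x = a → c a < T a) := by
      grind
    refine .of_batch (hU haI) (hT a haI) (hc a haI) (w := s a) (fun hw ha => ?_) hhit ?_
    · have := hsave a haI hw ha
      rw [Finset.filter_false_of_mem (by simpa using hmin)] at this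
      simpa [loss] using this
    refine ih (fun x hx => hmem.2 ⟨hU (hUI hx), fun e => absurd e (hne hx)⟩)
      (hind.mono (Finset.coe_subset.2 (Finset.subset_insert a U)))
      (fun x hx => by simpa [hne hx] using hT x (hUI hx))
      (fun x hx => by simpa [hne hx] using hc x (hUI hx))
      (fun x hx hs ha => ?_) (fun v => by grind) (fun v hv => ?_) fun v hv => by grind
    · have hsx : s x ≠ a := fun e => hnadj (hUI hx) haI (e ▸ ha)
      have hsA : s x ∈ A := (hmem.1 hs).1
      have hsavex := hsave x (hUI hx) hsA ha
      have hloss := loss_filter_insert_le (G := G) (s := s) (c := c) haU (ρ · < ρ x) (s x)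
      rw [Function.update_of_ne hsx, Function.update_of_ne (hne hx),
        if_neg (c := _ ∧ x ≠ s a) fun h => hnadj haI (hUI hx) h.1]
      split_ifs at hloss ⊢ with hit
      · have := hhit (s x) hsA hit.1 hit.2
        omega
      · omega
    · have := hS' v hv
      rw [loss_insert haU] at this
      split_ifs at this ⊢ <;> omega

theorem ST4DegOn.of_isIndepSet {G : SimpleGraph V} {A : Finset V} {S T : V → ℕ}
    (hA : G.IsIndepSet A) (hT : ∀ v ∈ A, 0 < T v) : ST4DegOn G A S T :=
  .of_sweep (fun _ => ()) id T A subset_rfl hA hT (fun _ _ => le_rfl)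
    (fun _ _ _ ha => absurd ha G.irrefl) (A' := ∅) (S' := S) (T' := T) (by simp) (by simp)
    (by simp) ⟨[], trivial, by simp, rfl⟩

/-- A decomposition of `G` into pairwise nonadjacent branch vertices, those of level `0`, and
disjoint paths joining them, each with at least `m - 1` vertices. The vertices of such a path have
levels `1, 2, …`; the neighbours of a vertex `v` on it are `down v` and `up v`, the latter being a
branch vertex if `v` has the largest level of its path. At branch vertices `down` and `up` are
irrelevant. -/
structure Levelling (G : SimpleGraph V) (m : ℕ) where
  level : V → ℕ
  down : V → V
  up : V → V
  not_adj : ∀ {v w}, level v = 0 → level w = 0 → ¬ G.Adj v w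
  adj_iff : ∀ {v}, 0 < level v → ∀ w, G.Adj v w ↔ w = down v ∨ w = up v
  level_down : ∀ {v}, 0 < level v → level (down v) + 1 = level v
  level_up : ∀ {v}, 0 < level v →
    level (up v) = level v + 1 ∨ (level (up v) = 0 ∧ m ≤ level v + 1)

namespace Levelling

variable {G : SimpleGraph V} {v w : V}

section

variable {m : ℕ} (L : Levelling G m)

theorem adj_down (hv : 0 < L.level v) : G.Adj v (L.down v) := (L.adj_iff hv _).2 (.inl rfl)

theorem adj_up (hv : 0 < L.level v) : G.Adj v (L.up v) := (L.adj_iff hv _).2 (.inr rfl)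

theorem down_ne_up (hv : 0 < L.level v) (hd : 0 < L.level (L.down v)) : L.down v ≠ L.up v := by
  have hdown := L.level_down hv
  have hup := L.level_up hv
  intro e
  rw [e] at hd hdown
  omega

theorem eq_up_iff_eq_down (hv : 0 < L.level v) (hw : 0 < L.level w) :
    w = L.up v ↔ v = L.down w := by
  constructor
  · rintro rfl
    refine ((L.adj_iff hw v).1 (L.adj_up hv).symm).resolve_right fun e => ?_
    have hup := L.level_up hv
    have hupup := L.level_up hw
    rw [← e] at hupup
    omega
  · rintro rfl
    refine ((L.adj_iff hv w).1 (L.adj_down hw).symm).resolve_left fun e => ?_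
    have hdown := L.level_down hw
    have hdowndown := L.level_down hv
    rw [← e] at hdowndown
    omega

theorem adj_and_ne_down_iff (hv : 0 < L.level v) (hw : 0 < L.level w) :
    G.Adj w v ∧ v ≠ L.down w ↔ w = L.down v := by
  rw [← L.eq_up_iff_eq_down hw hv, L.adj_iff hw]
  refine ⟨fun h => h.1.resolve_left h.2, fun e => ⟨.inr e, fun e' => ?_⟩⟩
  exact L.down_ne_up hw (e' ▸ hv) (e'.symm.trans e)

theorem adj_and_ne_up_iff (hv : 0 < L.level v) (hw : 0 < L.level w) :
    G.Adj w v ∧ v ≠ L.up w ↔ w = L.up v := by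
  rw [L.eq_up_iff_eq_down hv hw, L.adj_iff hw]
  refine ⟨fun h => h.1.resolve_right h.2, fun e => ⟨.inl e, fun e' => ?_⟩⟩
  exact L.down_ne_up hw (e ▸ hv) (e.symm.trans e')

theorem loss_down {U : Finset V} (hU : ∀ u ∈ U, 0 < L.level u) (hv : 0 < L.level v) (c : V → ℕ) :
    loss G L.down c U v = if L.down v ∈ U then c (L.down v) else 0 := by
  rw [loss, ← Finset.sum_ite_eq']
  exact Finset.sum_congr rfl fun u hu => by simp only [L.adj_and_ne_down_iff hv (hU u hu)]

theorem loss_up {U : Finset V} (hU : ∀ u ∈ U, 0 < L.level u) (hv : 0 < L.level v) (c : V → ℕ) :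
    loss G L.up c U v = if L.up v ∈ U then c (L.up v) else 0 := by
  rw [loss, ← Finset.sum_ite_eq']
  exact Finset.sum_congr rfl fun u hu => by simp only [L.adj_and_ne_up_iff hv (hU u hu)]

theorem loss_le (hv : 0 < L.level v) (s : V → V) (c : V → ℕ) (U : Finset V) :
    loss G s c U v ≤
      (if L.down v ∈ U then c (L.down v) else 0) + if L.up v ∈ U then c (L.up v) else 0 := by
  rw [loss, ← Finset.sum_ite_eq' U (L.down v), ← Finset.sum_ite_eq' U (L.up v),
    ← Finset.sum_add_distrib]
  refine Finset.sum_le_sum fun u _ => ?_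
  rw [G.adj_comm, L.adj_iff hv]
  split_ifs <;> grind

theorem isIndepSet_of_parity {A : Finset V} (hA : ∀ v ∈ A, 0 < L.level v)
    (hpar : ∀ v ∈ A, ∀ w ∈ A, (2 ∣ L.level v ↔ 2 ∣ L.level w)) : G.IsIndepSet A := by
  intro v hv w hw _ ha
  have hdown := L.level_down (hA v hv)
  have hup := L.level_up (hA v hv)
  have hpos := hA w hw
  have hiff := hpar v hv w hw
  rcases (L.adj_iff (hA v hv) w).1 ha with rfl | rfl <;> omega

variable [Fintype V]

/-- The set of vertices that are not branch vertices. -/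
def interior : Finset V := {v | 0 < L.level v}

theorem mem_interior : v ∈ L.interior ↔ 0 < L.level v := by simp [interior]

end

variable [Fintype V] {r : ℕ} (L : Levelling G (2 * r))

/-- The shield that is left on the interior vertices, starting from `r + 1`, when every branch
vertex has operated `r` times. -/
def pathShield (v : V) : ℕ :=
  r + 1 - ((if L.level v = 1 then r else 0) + if L.level (L.up v) = 0 then r else 0)

/-- A lower bound for the shield that the first sweep leaves on the interior vertices. -/
def midShield (v : V) : ℕ :=
  if L.level (L.up v) = 0 then 0 else if 2 ∣ L.level v then r + 1 else min r ((L.level v + 1) / 2)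

/-- The target that the first sweep leaves on the interior vertices. -/
def midTarget (v : V) : ℕ :=
  if 2 ∣ L.level v then min r (L.level v / 2) else r

theorem st4DegOn_midShield_midTarget (hr : 0 < r) :
    ST4DegOn G L.interior L.midShield L.midTarget := by
  let U : Finset V := {v ∈ L.interior | 2 ∣ L.level v}
  have hU : ∀ {v}, v ∈ U ↔ 0 < L.level v ∧ 2 ∣ L.level v := by simp [U, mem_interior]
  refine .of_sweep (OrderDual.toDual ∘ L.level) L.up L.midTarget U
    (A' := {v ∈ L.interior | ¬ 2 ∣ L.level v}) (S' := 0) (T' := fun _ => r)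
    (Finset.filter_subset _ _) ?indep (fun v hv => ?pos) (fun _ _ => le_rfl)
    (fun v hv hup _ => ?save) (fun v => ?active) (fun v hv => ?shield) (fun v hv => ?target)
    (.of_isIndepSet ?odd fun _ _ => hr)
  case indep =>
    exact L.isIndepSet_of_parity (fun v hv => (hU.1 hv).1) fun v hv w hw =>
      iff_of_true (hU.1 hv).2 (hU.1 hw).2
  case pos =>
    have := hU.1 hv
    simp only [midTarget]
    split_ifs <;> omega
  case save =>
    obtain ⟨hv, hpar⟩ := hU.1 hv
    rw [mem_interior] at hup
    have hlevel := L.level_up hv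
    have hlevel' := L.level_up hup
    rw [L.loss_up (fun u hu => (hU.1 (Finset.mem_filter.1 hu).1).1) hup]
    simp only [midShield, midTarget, Finset.mem_filter, hU, Function.comp_apply,
      OrderDual.toDual_lt_toDual]
    split_ifs <;> omega
  case active =>
    simp only [Finset.mem_filter, hU]
    grind [mem_interior, midTarget]
  case shield =>
    obtain ⟨hv, hpar⟩ := Finset.mem_filter.1 hv
    rw [mem_interior] at hv
    have hlevel := L.level_up hv
    rw [L.loss_up (fun u hu => (hU.1 hu).1) hv]
    simp only [midShield, midTarget, hU, Pi.zero_apply]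
    split_ifs <;> omega
  case target =>
    simp [U, midTarget, (Finset.mem_filter.1 hv).2]
  case odd =>
    refine L.isIndepSet_of_parity (fun v hv => ?_) fun v hv w hw => ?_
    · exact L.mem_interior.1 (Finset.mem_filter.1 hv).1
    · exact iff_of_false (Finset.mem_filter.1 hv).2 (Finset.mem_filter.1 hw).2

theorem st4DegOn_pathShield (hr : 0 < r) :
    ST4DegOn G L.interior L.pathShield fun _ => r := by
  let U : Finset V := {v ∈ L.interior | 2 ∣ L.level v ∧ L.level v < 2 * r}
  have hU : ∀ {v}, v ∈ U ↔ 0 < L.level v ∧ 2 ∣ L.level v ∧ L.level v < 2 * r := by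
    simp [U, mem_interior]
  refine .of_sweep L.level L.down (fun v => r - L.level v / 2) U
    (A' := L.interior) (S' := L.midShield) (T' := L.midTarget)
    (Finset.filter_subset _ _) ?indep (fun _ _ => hr) (fun _ _ => Nat.sub_le ..)
    (fun v hv hdown _ => ?save) (fun v => ?active) (fun v hv => ?shield) (fun v hv => ?target)
    (L.st4DegOn_midShield_midTarget hr)
  case indep =>
    exact L.isIndepSet_of_parity (fun v hv => (hU.1 hv).1) fun v hv w hw =>
      iff_of_true (hU.1 hv).2.1 (hU.1 hw).2.1
  case save =>
    obtain ⟨hv, hpar, hlt⟩ := hU.1 hv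
    rw [mem_interior] at hdown
    have hlevel := L.level_down hv
    have hlevel' := L.level_down hdown
    have hup := L.level_up hv
    rw [L.loss_down (fun u hu => (hU.1 (Finset.mem_filter.1 hu).1).1) hdown]
    simp only [pathShield, Finset.mem_filter, hU]
    split_ifs <;> omega
  case active =>
    refine (and_iff_left_of_imp fun _ hv => ?_).symm
    have := hU.1 hv
    omega
  case shield =>
    rw [mem_interior] at hv
    have hlevel := L.level_down hv
    have hup := L.level_up hv
    rw [L.loss_down (fun u hu => (hU.1 hu).1) hv]
    simp only [midShield, pathShield, hU]
    split_ifs <;> omega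
  case target =>
    rw [mem_interior] at hv
    simp only [midTarget, hU]
    split_ifs <;> omega

theorem st4Deg (L : Levelling G (2 * r)) (hr : 0 < r) : ST4Deg G (fun _ => r + 1) fun _ => r := by
  let U : Finset V := {v | L.level v = 0}
  have hU : ∀ {v}, v ∈ U ↔ L.level v = 0 := by simp [U]
  refine .of_sweep (fun _ => ()) id (fun _ => r) U (A' := L.interior) (S' := L.pathShield)
    (T' := fun _ => r) (Finset.subset_univ _)
    (fun v hv w hw _ => L.not_adj (hU.1 hv) (hU.1 hw)) (fun _ _ => hr) (fun _ _ => le_rfl)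
    (fun _ _ _ ha => absurd ha G.irrefl) (fun v => ?active) (fun v hv => ?shield)
    (fun v hv => ?target) (L.st4DegOn_pathShield hr)
  case active =>
    simp [mem_interior, hU, Nat.pos_iff_ne_zero]
  case shield =>
    rw [mem_interior] at hv
    have hlevel := L.level_down hv
    have hup := L.level_up hv
    have hloss := L.loss_le hv id (fun _ => r) U
    simp only [hU] at hloss
    simp only [pathShield]
    split_ifs at hloss ⊢ <;> omega
  case target =>
    rw [mem_interior] at hv
    rw [if_neg (by simp [hU, hv.ne'])]

end Levelling

theorem mem_internals_iff {G : SimpleGraph V} {a b : V} (p : G.Walk a b) (x : V) :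
    x ∈ internals p ↔ ∃ i, 0 < i ∧ i < p.length ∧ p.getVert i = x := by
  simp only [internals, List.mem_iff_getElem, List.length_dropLast, List.length_tail,
    SimpleGraph.Walk.length_support, List.getElem_dropLast, List.getElem_tail,
    SimpleGraph.Walk.support_getElem_eq_getVert]
  constructor
  · rintro ⟨i, hi, rfl⟩
    exact ⟨i + 1, by omega, by omega, rfl⟩
  · rintro ⟨i, h0, hi, rfl⟩
    exact ⟨i - 1, by omega, by rw [Nat.sub_add_cancel h0]⟩

namespace IsPathSubdivision

variable {VH VG : Type} {H : SimpleGraph VH} {G : SimpleGraph VG} {m : ℕ}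
  (D : IsPathSubdivision H G m) {u v u' v' : VH} {i j : ℕ}

theorem getVert_ne_branch (h : H.Adj u v) (h0 : 0 < i) (hi : i < (D.P h).length) (w : VH) :
    (D.P h).getVert i ≠ D.f w :=
  D.internal_not_branch h _ ((mem_internals_iff _ _).2 ⟨i, h0, hi, rfl⟩) w

section LinearOrder

variable [LinearOrder VH]

/-- An internal vertex is not an endpoint of any path, so `j` is strictly inside its path too. -/
theorem eq_of_getVert_eq (h : H.Adj u v) (h' : H.Adj u' v') (hu : u < v) (hu' : u' < v')
    (h0 : 0 < i) (hi : i < (D.P h).length) (hj : j ≤ (D.P h').length)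
    (e : (D.P h').getVert j = (D.P h).getVert i) : u' = u ∧ v' = v ∧ j = i := by
  have hj0 : j ≠ 0 := by
    rintro rfl
    exact D.getVert_ne_branch h h0 hi u' (by simpa using e.symm)
  have hjlt : j < (D.P h').length := hj.lt_of_ne <| by
    rintro rfl
    exact D.getVert_ne_branch h h0 hi v' (by simpa using e.symm)
  have hs : s(u, v) = s(u', v') := by
    by_contra hne
    exact D.internals_disjoint h h' hne _ ((mem_internals_iff _ _).2 ⟨i, h0, hi, rfl⟩)
      ((mem_internals_iff _ _).2 ⟨j, Nat.pos_of_ne_zero hj0, hjlt, e⟩)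
  rcases Sym2.eq_iff.1 hs with ⟨rfl, rfl⟩ | ⟨rfl, rfl⟩
  · exact ⟨rfl, rfl, (D.isPath h).getVert_injOn hj hi.le e⟩
  · exact absurd hu hu'.not_gt

/-- The distance from an internal vertex to the end of its path, every path being traversed towards
its larger end. Branch vertices get the value `0`; if the set is empty this relies on
`sInf ∅ = 0`. -/
def level (x : VG) : ℕ :=
  sInf {n | ∃ (u v : VH) (h : H.Adj u v), u < v ∧
    ∃ i, 0 < i ∧ i + n = (D.P h).length ∧ (D.P h).getVert i = x}

theorem exists_getVert_of_level_pos {x : VG} (hx : 0 < D.level x) :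
    ∃ (u v : VH) (h : H.Adj u v), u < v ∧
      ∃ i, 0 < i ∧ i < (D.P h).length ∧ (D.P h).getVert i = x := by
  obtain ⟨u, v, h, hu, i, h0, hi, e⟩ := Nat.sInf_mem (Nat.nonempty_of_pos_sInf hx)
  exact ⟨u, v, h, hu, i, h0, hi ▸ Nat.lt_add_of_pos_right hx, e⟩

theorem level_branch (w : VH) : D.level (D.f w) = 0 := by
  by_contra hne
  obtain ⟨u, v, h, -, i, h0, hi, e⟩ := D.exists_getVert_of_level_pos (Nat.pos_of_ne_zero hne)
  exact D.getVert_ne_branch h h0 hi w e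

theorem level_getVert (h : H.Adj u v) (hu : u < v) (h0 : 0 < i) (hi : i ≤ (D.P h).length) :
    D.level ((D.P h).getVert i) = (D.P h).length - i := by
  rcases hi.eq_or_lt with rfl | hi
  · rw [SimpleGraph.Walk.getVert_length, level_branch, Nat.sub_self]
  · rw [level, ← csInf_singleton ((D.P h).length - i)]
    congr 1
    ext n
    constructor
    · rintro ⟨u', v', h', hu', j, -, hj, e⟩
      obtain ⟨rfl, rfl, rfl⟩ := D.eq_of_getVert_eq h h' hu hu' h0 hi (by omega) e
      exact Nat.eq_sub_of_add_eq' hj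
    · rintro rfl
      exact ⟨u, v, h, hu, i, h0, Nat.add_sub_of_le hi.le, rfl⟩

theorem adj_iff_exists_getVert (x y : VG) : G.Adj x y ↔ ∃ (u v : VH) (h : H.Adj u v), u < v ∧
    ∃ i < (D.P h).length, s((D.P h).getVert i, (D.P h).getVert (i + 1)) = s(x, y) := by
  simp only [D.cover_edges, ← SimpleGraph.Walk.mk_mem_edges_iff_exists]
  constructor
  · rintro ⟨u, v, h, he⟩
    rcases h.ne.lt_or_gt with hlt | hlt
    · exact ⟨u, v, h, hlt, he⟩
    · refine ⟨v, u, h.symm, hlt, ?_⟩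
      rwa [D.symm h, SimpleGraph.Walk.edges_reverse, List.mem_reverse]
  · rintro ⟨u, v, h, -, he⟩
    exact ⟨u, v, h, he⟩

theorem adj_getVert_iff (h : H.Adj u v) (hu : u < v) (h0 : 0 < i) (hi : i < (D.P h).length)
    (y : VG) : G.Adj ((D.P h).getVert i) y ↔
      y = (D.P h).getVert (i + 1) ∨ y = (D.P h).getVert (i - 1) := by
  constructor
  · intro ha
    obtain ⟨u', v', h', hu', j, hj, e⟩ := (D.adj_iff_exists_getVert _ _).1 ha
    rcases Sym2.eq_iff.1 e with ⟨hx, hy⟩ | ⟨hy, hx⟩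
    · obtain ⟨rfl, rfl, rfl⟩ := D.eq_of_getVert_eq h h' hu hu' h0 hi hj.le hx
      exact .inl hy.symm
    · obtain ⟨rfl, rfl, rfl⟩ := D.eq_of_getVert_eq h h' hu hu' h0 hi hj hx
      exact .inr hy.symm
  · rintro (rfl | rfl)
    · exact (D.P h).adj_getVert_succ hi
    · have := (D.P h).adj_getVert_succ (i := i - 1) (by omega)
      rw [Nat.sub_add_cancel h0] at this
      exact this.symm

theorem not_adj_of_level_eq_zero (hm : 2 ≤ m) {x y : VG} (hx : D.level x = 0)
    (hy : D.level y = 0) : ¬ G.Adj x y := fun ha => by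
  obtain ⟨u, v, h, hu, i, hi, e⟩ := (D.adj_iff_exists_getVert _ _).1 ha
  have hlen := D.len h
  have hmid : D.level ((D.P h).getVert i) ≠ 0 ∨ D.level ((D.P h).getVert (i + 1)) ≠ 0 := by
    rcases Nat.eq_zero_or_pos i with rfl | h0
    · right
      rw [D.level_getVert h hu Nat.one_pos (by omega)]
      omega
    · left
      rw [D.level_getVert h hu h0 hi.le]
      omega
  rcases Sym2.eq_iff.1 e with ⟨rfl, rfl⟩ | ⟨rfl, rfl⟩ <;> tauto

theorem exists_down_up {x : VG} (hx : 0 < D.level x) : ∃ down up : VG,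
    (∀ y, G.Adj x y ↔ y = down ∨ y = up) ∧ D.level down + 1 = D.level x ∧
      (D.level up = D.level x + 1 ∨ (D.level up = 0 ∧ m ≤ D.level x + 1)) := by
  obtain ⟨u, v, h, hu, i, h0, hi, rfl⟩ := D.exists_getVert_of_level_pos hx
  have hlen := D.len h
  refine ⟨_, _, D.adj_getVert_iff h hu h0 hi, ?_, ?_⟩
  · rw [D.level_getVert h hu h0 hi.le, D.level_getVert h hu i.succ_pos hi]
    omega
  · rw [D.level_getVert h hu h0 hi.le]
    rcases (Nat.one_le_of_lt h0).eq_or_lt with rfl | h1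
    · right
      rw [Nat.sub_self, SimpleGraph.Walk.getVert_zero, D.level_branch]
      exact ⟨rfl, by omega⟩
    · left
      rw [D.level_getVert h hu (by omega) (by omega)]
      omega

end LinearOrder

theorem nonempty_levelling (D : IsPathSubdivision H G m) (hm : 2 ≤ m) :
    Nonempty (Levelling G m) := by
  let : LinearOrder VH := linearOrderOfSTO WellOrderingRel
  choose! down up hadj hdown hup using fun x => D.exists_down_up (x := x)
  exact ⟨⟨D.level, down, up, D.not_adj_of_level_eq_zero hm, hadj _, hdown _, hup _⟩⟩

end IsPathSubdivision

theorem ST4Deg.st4Star_le [Fintype V] {G : SimpleGraph V} {s t : ℕ} (ht : 0 < t)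
    (h : ST4Deg G (fun _ => s) fun _ => t) : ST4Star G ≤ ((s : ℝ) + t) / t := by
  refine csInf_le ⟨0, ?_⟩ ⟨s, t, ht, h, rfl⟩
  rintro x ⟨s, t, -, -, rfl⟩
  positivity

theorem st4Star_subdivision_general {VH VG : Type} [Fintype VG] (H : SimpleGraph VH)
    (G : SimpleGraph VG) (r : ℕ) (hr : 0 < r)
    (hsub : Nonempty (IsPathSubdivision H G (2 * r))) : ST4Star G ≤ 2 + 1 / (r : ℝ) := by
  obtain ⟨D⟩ := hsub
  obtain ⟨L⟩ := D.nonempty_levelling (by omega)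
  calc ST4Star G ≤ ((r + 1 : ℕ) + r : ℝ) / r := (L.st4Deg hr).st4Star_le hr
    _ = 2 + 1 / r := by
      push_cast
      field_simp
      ring

/-- Suppose `H` is a connected graph and `G` is a subdivision of `H` in which
every edge of `H` is replaced by internally disjoint paths each of length at least `2r`,
for some integer `r ≥ 2`.  Then `ST⁽⁴⁾*(G) ≤ 2 + 1/r`. -/
theorem st4Star_subdivision {VH VG : Type} [Fintype VH] [Fintype VG]
    (H : SimpleGraph VH) (G : SimpleGraph VG) (r : ℕ) (hr : 2 ≤ r)
    (hH : H.Connected) (hsub : Nonempty (IsPathSubdivision H G (2 * r))) :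
    ST4Star G ≤ 2 + 1 / (r : ℝ) :=
  st4Star_subdivision_general H G r (by omega) hsub

end StrictDeg
end
end
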